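/- Let β > 1 and let J ⊆ (0, ∞) be a closed interval. The set E^β(J) of pairs (x,y) ∈ [0,1)² for which the set of accumulation points of the sequence ((log W_n^β(x,y))/n)_{n≥1} is exactly J has Hausdorff dimension 2. -/

import Mathlib

open Filter MeasureTheory Set

/-- The β-transformation T_β(x) = βx − ⌊βx⌋. -/
noncomputable def betaT (β : ℝ) : ℝ → ℝ := fun x => β * x - ⌊β * x⌋

/-- The (i+1)-th digit of the β-expansion of x (0-indexed). -/
noncomputable def betaDigit (β x : ℝ) (i : ℕ) : ℤ := ⌊β * (betaT β)^[i] x⌋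

/-- A finite word is β-admissible if some x ∈ [0,1) has β-expansion beginning with it. -/
def IsAdmissibleWord (β : ℝ) (w : List ℤ) : Prop :=
  ∃ x ∈ Set.Ico (0:ℝ) 1, ∀ i (h : i < w.length), w.get ⟨i, h⟩ = betaDigit β x i

/-- An infinite sequence is β-admissible if it is the digit sequence of some x ∈ [0,1). -/
def IsAdmissibleSeq (β : ℝ) (e : ℕ → ℤ) : Prop :=
  ∃ x ∈ Set.Ico (0:ℝ) 1, ∀ i, e i = betaDigit β x i

/-- The basic interval (cylinder) of a word. -/
def cylinder (β : ℝ) (w : List ℤ) : Set ℝ :=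
  {x | x ∈ Set.Ico (0:ℝ) 1 ∧ ∀ i (h : i < w.length), betaDigit β x i = w.get ⟨i, h⟩}

/-- A basic interval is full if its length is β^{-n}. -/
def IsFull (β : ℝ) (w : List ℤ) : Prop :=
  volume (cylinder β w) = ENNReal.ofReal (1 / β ^ w.length)

-- The infinite β-expansion of 1: the periodic modification if the expansion of 1
-- terminates, and the expansion of 1 itself otherwise (0-indexed).
open Classical in
noncomputable def betaStar (β : ℝ) : ℕ → ℤ :=
  if h : ∃ n, betaDigit β 1 n ≠ 0 ∧ ∀ i, n < i → betaDigit β 1 i = 0 then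
    fun i =>
      if i % (h.choose + 1) = h.choose then betaDigit β 1 h.choose - 1
      else betaDigit β 1 (i % (h.choose + 1))
  else betaDigit β 1

/-- Strict lexicographic order on integer sequences. -/
def lexLt (a b : ℕ → ℤ) : Prop := ∃ n, (∀ i, i < n → a i = b i) ∧ a n < b n

/-- l_n(β): the length of the longest run of zeros following the n-th digit
(1-indexed position n) in the infinite β-expansion of 1. -/
noncomputable def zeroRunLen (β : ℝ) (n : ℕ) : ℕ∞ :=
  ⨆ k ∈ {k : ℕ | ∀ j, j < k → betaStar β (n + j) = 0}, (k : ℕ∞)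

/-- A₀: the set of bases β > 1 with bounded zero-runs in the expansion of 1. -/
def A0 : Set ℝ := {β | 1 < β ∧ ∃ C : ℕ, ∀ n, 1 ≤ n → zeroRunLen β n ≤ (C : ℕ∞)}

/-- The waiting time W_n^β(x,y): first k ≥ 1 with T_β^k x in the n-th basic interval of y. -/
noncomputable def waitingTime (β x y : ℝ) (n : ℕ) : ℕ∞ :=
  sInf {k : ℕ∞ | ∃ m : ℕ, k = (m : ℕ∞) ∧ 1 ≤ m ∧
    ∀ i, i < n → betaDigit β ((betaT β)^[m] x) i = betaDigit β y i}

/-- (log W_n^β(x,y)) / n as an extended real, with value ⊤ when W_n = ∞. -/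
noncomputable def waitingRatio (β x y : ℝ) (n : ℕ) : EReal :=
  if h : waitingTime β x y n = ⊤ then ⊤
  else (((Real.log ((waitingTime β x y n).untop h : ℕ)) / n : ℝ) : EReal)


open Classical in
noncomputable def fullF (β : ℝ) : ℕ → Finset ℝ
  | 0 => {0}
  | n + 1 => (((Finset.range (⌈β⌉₊ + 1)) ×ˢ fullF β n).filter
      (fun p => (p.1 : ℝ) + p.2 + (β ^ n)⁻¹ ≤ β)).image (fun p => ((p.1 : ℝ) + p.2) / β)

lemma mem_fullF_succ {β : ℝ} {n : ℕ} {a : ℝ} :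
    a ∈ fullF β (n + 1) ↔ ∃ d : ℕ, d < ⌈β⌉₊ + 1 ∧ ∃ b ∈ fullF β n,
      (d : ℝ) + b + (β ^ n)⁻¹ ≤ β ∧ a = (d + b) / β := by
  classical
  simp only [fullF, Finset.mem_image, Finset.mem_filter, Finset.mem_product, Finset.mem_range,
    Prod.exists]
  constructor
  · rintro ⟨d, b, ⟨⟨h1, h2⟩, h3⟩, h4⟩
    exact ⟨d, h1, b, h2, h3, h4.symm⟩
  · rintro ⟨d, h1, b, h2, h3, h4⟩
    exact ⟨d, b, ⟨⟨h1, h2⟩, h3⟩, h4.symm⟩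

lemma mem_fullF_cons {β : ℝ} (hβ : 1 < β) {n : ℕ} {b : ℝ} (hb : b ∈ fullF β n) (hb0 : 0 ≤ b)
    (d : ℕ) (h : (d : ℝ) + b + (β ^ n)⁻¹ ≤ β) : (d + b) / β ∈ fullF β (n + 1) := by
  rw [mem_fullF_succ]
  refine ⟨d, ?_, b, hb, h, rfl⟩
  have h1 : (0:ℝ) < (β ^ n)⁻¹ := by positivity
  have h2 : (d : ℝ) ≤ ⌈β⌉₊ := by linarith [Nat.le_ceil β]
  have : d ≤ ⌈β⌉₊ := by exact_mod_cast h2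
  omega

lemma fullF_bounds {β : ℝ} (hβ : 1 < β) (n : ℕ) : ∀ a ∈ fullF β n, 0 ≤ a ∧ a + (β ^ n)⁻¹ ≤ 1 := by
  have hβ0 : 0 < β := by linarith
  induction n with
  | zero => intro a ha; simp [fullF] at ha; subst ha; simp
  | succ n ih =>
    intro a ha
    obtain ⟨d, -, b, hb, h, rfl⟩ := mem_fullF_succ.1 ha
    have := ih b hb
    refine ⟨div_nonneg (by have := this.1; positivity) hβ0.le, ?_⟩
    rw [pow_succ, mul_inv, ← div_eq_mul_inv, ← add_div, div_le_one hβ0]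
    exact h

lemma zero_mem_fullF {β : ℝ} (hβ : 1 < β) (n : ℕ) : (0:ℝ) ∈ fullF β n := by
  induction n with
  | zero => simp [fullF]
  | succ n ih =>
    have := mem_fullF_cons hβ ih le_rfl 0 (by
      have := fullF_bounds hβ n 0 ih
      simp at this ⊢; linarith)
    simpa using this

lemma betaT_cons {β : ℝ} (hβ : 1 < β) (d : ℕ) {s : ℝ} (hs : s ∈ Set.Ico (0:ℝ) 1) :
    ⌊β * ((d + s) / β)⌋ = (d : ℤ) ∧ betaT β ((d + s) / β) = s := by
  have hβ0 : β ≠ 0 := by linarith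
  have h1 : β * ((d + s) / β) = d + s := by field_simp
  have h2 : ⌊(d : ℝ) + s⌋ = (d : ℤ) := by
    rw [Int.floor_eq_iff]; push_cast; exact ⟨by linarith [hs.1], by linarith [hs.2]⟩
  constructor
  · rw [h1, h2]
  · simp only [betaT]; rw [h1, h2]; push_cast; ring

lemma betaDigit_add (β x : ℝ) (m i : ℕ) :
    betaDigit β ((betaT β)^[m] x) i = betaDigit β x (m + i) := by
  simp only [betaDigit]
  rw [← Function.iterate_add_apply, add_comm]

lemma betaDigit_succ (β x : ℝ) (i : ℕ) :
    betaDigit β x (i + 1) = betaDigit β (betaT β x) i := by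
  simp only [betaDigit]
  rw [Function.iterate_succ_apply]

lemma fullF_digits {β : ℝ} (hβ : 1 < β) (n : ℕ) : ∀ a ∈ fullF β n, ∀ t ∈ Set.Ico (0:ℝ) 1,
    (betaT β)^[n] (a + t / β ^ n) = t ∧
    ∀ i < n, betaDigit β (a + t / β ^ n) i = betaDigit β a i := by
  have hβ0 : 0 < β := by linarith
  induction n with
  | zero => intro a ha t ht; simp [fullF] at ha; subst ha; simp
  | succ n ih =>
    intro a ha t ht
    obtain ⟨d, -, b, hb, h, rfl⟩ := mem_fullF_succ.1 ha
    have hbb := fullF_bounds hβ n b hb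
    have hpow : 0 < β ^ n := by positivity
    have hs : b + t / β ^ n ∈ Set.Ico (0:ℝ) 1 := by
      refine ⟨by have := ht.1; have := hbb.1; positivity, ?_⟩
      have : t / β ^ n < (β ^ n)⁻¹ := by
        rw [div_eq_mul_inv]; exact mul_lt_of_lt_one_left (by positivity) ht.2
      linarith [hbb.2]
    have hs0 : b ∈ Set.Ico (0:ℝ) 1 := ⟨hbb.1, by
      have : 0 < (β ^ n)⁻¹ := by positivity
      linarith [hbb.2]⟩
    have e : ((d:ℝ) + b) / β + t / β ^ (n + 1) = (d + (b + t / β ^ n)) / β := by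
      field_simp
      ring
    rw [e]
    have k1 := betaT_cons hβ d hs
    have k0 := betaT_cons hβ d hs0
    have := ih b hb t ht
    refine ⟨?_, ?_⟩
    · rw [Function.iterate_succ_apply, k1.2]; exact this.1
    · intro i hi
      rcases i with _ | i
      · simp only [betaDigit, Function.iterate_zero, id]
        rw [k1.1, k0.1]
      · rw [betaDigit_succ, betaDigit_succ, k1.2, k0.2]
        exact this.2 i (by omega)

lemma fullF_zero_of_digits {β : ℝ} (hβ : 1 < β) (n : ℕ) : ∀ a ∈ fullF β n,
    (∀ i < n, betaDigit β a i = 0) → a = 0 := by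
  have hβ0 : 0 < β := by linarith
  induction n with
  | zero => intro a ha _; simpa [fullF] using ha
  | succ n ih =>
    intro a ha hd
    obtain ⟨d, -, b, hb, h, rfl⟩ := mem_fullF_succ.1 ha
    have hbb := fullF_bounds hβ n b hb
    have hs0 : b ∈ Set.Ico (0:ℝ) 1 := ⟨hbb.1, by
      have : 0 < (β ^ n)⁻¹ := by positivity
      linarith [hbb.2]⟩
    have k0 := betaT_cons hβ d hs0
    have h0 := hd 0 (by omega)
    simp only [betaDigit, Function.iterate_zero, id] at h0
    rw [k0.1] at h0
    have hb0 := ih b hb (fun i hi => by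
      have := hd (i+1) (by omega)
      rwa [betaDigit_succ, k0.2] at this)
    have : d = 0 := by exact_mod_cast h0
    subst this; subst hb0; simp

lemma fullF_sep {β : ℝ} (hβ : 1 < β) (n : ℕ) : ∀ a ∈ fullF β n, ∀ a' ∈ fullF β n, a < a' →
    (β ^ n)⁻¹ ≤ a' - a := by
  have hβ0 : 0 < β := by linarith
  induction n with
  | zero => intro a ha a' ha' h; simp [fullF] at ha ha'; subst ha; subst ha'; simp at h
  | succ n ih =>
    intro a ha a' ha' hlt
    obtain ⟨d, -, b, hb, h, rfl⟩ := mem_fullF_succ.1 ha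
    obtain ⟨d', -, b', hb', h', rfl⟩ := mem_fullF_succ.1 ha'
    have hbb := fullF_bounds hβ n b hb
    have hbb' := fullF_bounds hβ n b' hb'
    have hpos : 0 < (β ^ n)⁻¹ := by positivity
    rw [div_lt_div_iff_of_pos_right hβ0] at hlt
    rw [← sub_div, pow_succ, mul_inv, ← div_eq_mul_inv, div_le_div_iff_of_pos_right hβ0]
    rcases lt_trichotomy d d' with hd | hd | hd
    · have : (d:ℝ) + 1 ≤ d' := by exact_mod_cast hd
      linarith
    · subst hd
      have := ih b hb b' hb' (by linarith)
      linarith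
    · have : (d':ℝ) + 1 ≤ d := by exact_mod_cast hd
      linarith

lemma fullF_cover {β : ℝ} (hβ : 1 < β) (N : ℕ) : ∀ x ∈ Set.Ico (0:ℝ) 1, ∃ n ≤ N, ∃ a ∈ fullF β n,
    x ∈ Set.Ico (a + (β ^ n)⁻¹ - (β ^ N)⁻¹) (a + (β ^ n)⁻¹) := by
  have hβ0 : 0 < β := by linarith
  induction N with
  | zero => intro x hx; exact ⟨0, le_rfl, 0, by simp [fullF], by simpa using hx⟩
  | succ N ih =>
    intro x hx
    have hT : betaT β x ∈ Set.Ico (0:ℝ) 1 := by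
      simp only [betaT]; exact ⟨Int.fract_nonneg _, Int.fract_lt_one _⟩
    obtain ⟨n, hn, b, hb, hx1, hx2⟩ := ih _ hT
    have hfl : 0 ≤ ⌊β * x⌋ := Int.floor_nonneg.2 (mul_nonneg hβ0.le hx.1)
    obtain ⟨d, hd⟩ := Int.eq_ofNat_of_zero_le hfl
    have hxe : x = (d + betaT β x) / β := by
      simp only [betaT]; rw [hd]; push_cast; field_simp; ring
    have hbb := fullF_bounds hβ n b hb
    by_cases hc : (d:ℝ) + b + (β ^ n)⁻¹ ≤ β
    · refine ⟨n + 1, by omega, _, mem_fullF_cons hβ hb hbb.1 d hc, ?_⟩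
      have e1 : ((d:ℝ) + b) / β + (β ^ (n+1))⁻¹ = (d + (b + (β ^ n)⁻¹)) / β := by
        rw [pow_succ]; field_simp; ring
      have e2 : (β ^ (N+1))⁻¹ = (β ^ N)⁻¹ / β := by rw [pow_succ]; field_simp
      rw [e1, e2, ← sub_div, hxe]
      refine ⟨?_, ?_⟩
      · rw [div_le_div_iff_of_pos_right hβ0]; linarith
      · rw [div_lt_div_iff_of_pos_right hβ0]; linarith
    · refine ⟨0, by omega, 0, by simp [fullF], ?_⟩
      have e2 : (β ^ (N+1))⁻¹ = (β ^ N)⁻¹ / β := by rw [pow_succ]; field_simp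
      simp only [pow_zero, inv_one, zero_add]
      refine ⟨?_, hx.2⟩
      rw [e2, hxe, sub_le_iff_le_add, ← add_div, le_div_iff₀ hβ0]
      linarith

lemma fullF_card_mono {β : ℝ} (hβ : 1 < β) : Monotone (fun n => (fullF β n).card) := by
  refine monotone_nat_of_le_succ fun n => ?_
  have hβ0 : 0 < β := by linarith
  refine Finset.card_le_card_of_injOn (fun b => b / β) ?_ ?_
  · intro b hb
    have hbb := fullF_bounds hβ n b hb
    have := mem_fullF_cons hβ hb hbb.1 0 (by simp; linarith)
    simpa using this
  · intro a _ b _ h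
    simpa [hβ0.ne'] using h

lemma fullF_card {β : ℝ} (hβ : 1 < β) (N : ℕ) :
    β ^ N ≤ (N + 1) * ((fullF β N).card : ℝ) := by
  have hβ0 : 0 < β := by linarith
  have hsub : Set.Ico (0:ℝ) 1 ⊆ ⋃ n ∈ Finset.range (N+1), ⋃ a ∈ fullF β n,
      Set.Ico (a + (β ^ n)⁻¹ - (β ^ N)⁻¹) (a + (β ^ n)⁻¹) := by
    intro x hx
    obtain ⟨n, hn, a, ha, h⟩ := fullF_cover hβ N x hx
    simp only [Set.mem_iUnion]
    exact ⟨n, Finset.mem_range.2 (by omega), a, ha, h⟩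
  have h1 : volume (Set.Ico (0:ℝ) 1) ≤ ∑ n ∈ Finset.range (N+1), ∑ a ∈ fullF β n,
      ENNReal.ofReal ((β ^ N)⁻¹) := by
    refine (measure_mono hsub).trans ((measure_biUnion_finset_le _ _).trans ?_)
    refine Finset.sum_le_sum fun n _ => (measure_biUnion_finset_le _ _).trans ?_
    refine Finset.sum_le_sum fun a _ => ?_
    rw [Real.volume_Ico]; apply le_of_eq; congr 1; ring
  have h2 : (∑ n ∈ Finset.range (N+1), ∑ a ∈ fullF β n, ENNReal.ofReal ((β ^ N)⁻¹)) ≤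
      ∑ n ∈ Finset.range (N+1), ((fullF β N).card : ENNReal) * ENNReal.ofReal ((β ^ N)⁻¹) := by
    refine Finset.sum_le_sum fun n hn => ?_
    rw [Finset.sum_const, nsmul_eq_mul]
    refine mul_le_mul' ?_ le_rfl
    have hm : (fullF β n).card ≤ (fullF β N).card :=
      fullF_card_mono hβ (by simpa [Nat.lt_succ_iff] using hn)
    exact_mod_cast hm
  have h3 := h1.trans h2
  rw [Finset.sum_const, Finset.card_range, nsmul_eq_mul, Real.volume_Ico, sub_zero] at h3
  have h4 : ENNReal.ofReal 1 ≤ ENNReal.ofReal (((N+1:ℕ):ℝ) * (((fullF β N).card : ℝ) * (β ^ N)⁻¹)) := by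
    rw [ENNReal.ofReal_mul (by positivity), ENNReal.ofReal_mul (by positivity),
      ENNReal.ofReal_natCast, ENNReal.ofReal_natCast]
    exact h3
  rw [ENNReal.ofReal_le_ofReal_iff (by positivity), ← mul_assoc, ← div_eq_mul_inv,
    le_div_iff₀ (by positivity)] at h4
  push_cast at h4; linarith

/-- value of a block sequence -/
noncomputable def bval (β : ℝ) (N : ℕ) (c : ℕ → ℝ) : ℝ := ∑' i, c i / (β ^ (N + 1)) ^ i

section
variable {β : ℝ} {N : ℕ}

lemma geom_summ (hβ : 1 < β) : Summable (fun i : ℕ => (1 - (β ^ N)⁻¹) * ((β ^ (N + 1))⁻¹) ^ i) := by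
  refine Summable.mul_left _ (summable_geometric_of_lt_one (by positivity) ?_)
  exact inv_lt_one_of_one_lt₀ (one_lt_pow₀ hβ (by omega))

lemma bval_term (hβ : 1 < β) {c : ℕ → ℝ} (hc : ∀ i, c i ∈ fullF β N) (i : ℕ) :
    0 ≤ c i / (β ^ (N + 1)) ^ i ∧
      c i / (β ^ (N + 1)) ^ i ≤ (1 - (β ^ N)⁻¹) * ((β ^ (N + 1))⁻¹) ^ i := by
  have hb := fullF_bounds hβ N _ (hc i)
  constructor
  · exact div_nonneg hb.1 (by positivity)
  · rw [div_eq_mul_inv, inv_pow]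
    exact mul_le_mul_of_nonneg_right (by linarith) (by positivity)

lemma bval_summ (hβ : 1 < β) {c : ℕ → ℝ} (hc : ∀ i, c i ∈ fullF β N) :
    Summable (fun i => c i / (β ^ (N + 1)) ^ i) :=
  Summable.of_nonneg_of_le (fun i => (bval_term hβ hc i).1) (fun i => (bval_term hβ hc i).2)
    (geom_summ hβ)

lemma bval_mem (hβ : 1 < β) {c : ℕ → ℝ} (hc : ∀ i, c i ∈ fullF β N) :
    bval β N c ∈ Set.Ico (0:ℝ) 1 := by
  have hβ0 : 0 < β := by linarith
  refine ⟨tsum_nonneg fun i => (bval_term hβ hc i).1, ?_⟩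
  have h1 : bval β N c ≤ ∑' i : ℕ, (1 - (β ^ N)⁻¹) * ((β ^ (N + 1))⁻¹) ^ i :=
    Summable.tsum_le_tsum (fun i => (bval_term hβ hc i).2) (bval_summ hβ hc) (geom_summ hβ)
  have hlt : (β ^ (N + 1))⁻¹ < 1 := inv_lt_one_of_one_lt₀ (one_lt_pow₀ hβ (by omega))
  rw [tsum_mul_left, tsum_geometric_of_lt_one (by positivity) hlt] at h1
  refine h1.trans_lt ?_
  rw [← div_eq_mul_inv, div_lt_one (by linarith)]
  have : (β ^ (N+1))⁻¹ < (β ^ N)⁻¹ := by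
    apply inv_strictAnti₀ (by positivity)
    exact pow_lt_pow_right₀ hβ (by omega)
  linarith

lemma bval_succ (hβ : 1 < β) {c : ℕ → ℝ} (hc : ∀ i, c i ∈ fullF β N) :
    bval β N c = c 0 + bval β N (fun i => c (i + 1)) / β ^ (N + 1) := by
  unfold bval
  rw [(bval_summ hβ hc).tsum_eq_zero_add, ← tsum_div_const]
  simp only [pow_zero, div_one]
  congr 1
  refine tsum_congr fun i => ?_
  rw [pow_succ (β ^ (N+1)) i, div_div]

lemma bval_block (hβ : 1 < β) {c : ℕ → ℝ} (hc : ∀ i, c i ∈ fullF β N) :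
    (betaT β)^[N + 1] (bval β N c) = bval β N (fun i => c (i + 1)) ∧
    ∀ i < N + 1, betaDigit β (bval β N c) i = betaDigit β (c 0) i := by
  have hβ0 : 0 < β := by linarith
  set s := bval β N (fun i => c (i + 1)) with hs
  have hsm : s ∈ Set.Ico (0:ℝ) 1 := bval_mem hβ (fun i => hc (i + 1))
  have ht : s / β ∈ Set.Ico (0:ℝ) 1 :=
    ⟨div_nonneg hsm.1 hβ0.le, by rw [div_lt_one hβ0]; linarith [hsm.2]⟩
  have e : bval β N c = c 0 + (s / β) / β ^ N := by
    rw [bval_succ hβ hc, ← hs, pow_succ, div_div, mul_comm β]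
  have k := fullF_digits hβ N _ (hc 0) _ ht
  have k0 := fullF_digits hβ N _ (hc 0) 0 ⟨le_rfl, one_pos⟩
  rw [e]
  have c1 := betaT_cons hβ 0 hsm
  simp only [Nat.cast_zero, zero_add] at c1
  constructor
  · rw [Function.iterate_succ_apply', k.1]
    exact c1.2
  · intro i hi
    rcases Nat.lt_succ_iff_lt_or_eq.1 hi with h | h
    · exact k.2 i h
    · subst h
      have z := k0.1
      simp only [zero_div, add_zero] at z
      simp only [betaDigit]
      rw [k.1, z, c1.1]; simp

lemma bval_iter (hβ : 1 < β) (q : ℕ) : ∀ {c : ℕ → ℝ} (_ : ∀ i, c i ∈ fullF β N),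
    (betaT β)^[q * (N + 1)] (bval β N c) = bval β N (fun i => c (q + i)) := by
  induction q with
  | zero => intro c hc; simp
  | succ q ih =>
    intro c hc
    rw [Nat.add_mul, one_mul, Function.iterate_add_apply, (bval_block hβ hc).1, ih (fun i => hc (i+1))]
    congr 1; funext i; congr 1; ring

lemma bval_digit (hβ : 1 < β) {c : ℕ → ℝ} (hc : ∀ i, c i ∈ fullF β N) (q i : ℕ) (hi : i < N + 1) :
    betaDigit β (bval β N c) (q * (N + 1) + i) = betaDigit β (c q) i := by
  rw [← betaDigit_add, bval_iter hβ q hc, (bval_block hβ (fun i => hc (q + i))).2 i hi]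
  simp

lemma bval_gap (hβ : 1 < β) (q : ℕ) : ∀ {c c' : ℕ → ℝ} (_ : ∀ i, c i ∈ fullF β N)
    (_ : ∀ i, c' i ∈ fullF β N) (_ : ∀ i < q, c i = c' i) (_ : c q ≠ c' q),
    ((β ^ N)⁻¹ - (β ^ (N+1))⁻¹) / (β ^ (N + 1)) ^ q ≤ |bval β N c - bval β N c'| := by
  have hβ0 : 0 < β := by linarith
  induction q with
  | zero =>
    intro c c' hc hc' _ hne
    have key : ∀ {c c' : ℕ → ℝ} (_ : ∀ i, c i ∈ fullF β N)
        (_ : ∀ i, c' i ∈ fullF β N) (_ : c 0 < c' 0),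
        (β ^ N)⁻¹ - (β ^ (N+1))⁻¹ ≤ bval β N c' - bval β N c := by
      intro c c' hc hc' hlt
      have h1 := fullF_sep hβ N _ (hc 0) _ (hc' 0) hlt
      have m1 := bval_mem hβ (fun i => hc (i+1))
      have m2 := bval_mem hβ (fun i => hc' (i+1))
      rw [bval_succ hβ hc, bval_succ hβ hc']
      have a1 : bval β N (fun i => c (i+1)) / β ^ (N+1) ≤ (β ^ (N+1))⁻¹ := by
        rw [div_eq_mul_inv]; exact mul_le_of_le_one_left (by positivity) m1.2.le
      have a2 : 0 ≤ bval β N (fun i => c' (i+1)) / β ^ (N+1) := div_nonneg m2.1 (by positivity)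
      linarith
    simp only [pow_zero, div_one]
    rcases lt_or_gt_of_ne hne with h | h
    · have := key hc hc' h
      rw [abs_sub_comm]; exact this.trans (le_abs_self _)
    · exact (key hc' hc h).trans (le_abs_self _)
  | succ q ih =>
    intro c c' hc hc' heq hne
    have := ih (fun i => hc (i+1)) (fun i => hc' (i+1)) (fun i hi => heq (i+1) (by omega)) hne
    rw [bval_succ hβ hc, bval_succ hβ hc', heq 0 (by omega), add_sub_add_left_eq_sub, ← sub_div,
      abs_div, abs_of_pos (show 0 < β ^ (N+1) by positivity), pow_succ _ q, ← div_div]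
    exact div_le_div_of_nonneg_right this (by positivity)

/-- Hölder estimate -/
lemma bval_holder (hβ : 1 < β) {M : ℕ} {r C : ℝ} (hr : 0 < r) (hC : 0 ≤ C)
    {φ : ℕ → ℕ} (hφ : ∀ q, ((M : ℝ) ^ φ q)⁻¹ ≤ C * (((β ^ (N + 1)) ^ q)⁻¹) ^ r)
    {c c' : ℕ → ℝ} (hc : ∀ i, c i ∈ fullF β N) (hc' : ∀ i, c' i ∈ fullF β N)
    {δ δ' : ℕ → Fin M}
    (h : ∀ q, (∀ i < q, c i = c' i) → ∀ i < φ q, δ i = δ' i)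
    (hall : c = c' → δ = δ') :
    |Real.ofDigits δ - Real.ofDigits δ'| ≤
      (C / ((β ^ N)⁻¹ - (β ^ (N+1))⁻¹) ^ r) * |bval β N c - bval β N c'| ^ r := by
  have hβ0 : 0 < β := by linarith
  have hκ : 0 < (β ^ N)⁻¹ - (β ^ (N+1))⁻¹ := by
    rw [sub_pos]
    apply inv_strictAnti₀ (by positivity)
    exact pow_lt_pow_right₀ hβ (by omega)
  by_cases hcc : c = c'
  · rw [hall hcc]; simp; positivity
  · have hex : ∃ q, c q ≠ c' q := by
      by_contra hno; push Not at hno; exact hcc (funext hno)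
    classical
    have hq := Nat.find_spec hex
    have hlt : ∀ i < Nat.find hex, c i = c' i := fun i hi => by
      have := Nat.find_min hex hi; push Not at this; exact this
    set q := Nat.find hex
    have hg := bval_gap hβ q hc hc' hlt hq
    have h1 := Real.abs_ofDigits_sub_ofDigits_le (h q hlt)
    refine h1.trans ((hφ q).trans ?_)
    have h2 : (((β ^ N)⁻¹ - (β ^ (N+1))⁻¹) * ((β ^ (N + 1)) ^ q)⁻¹) ^ r ≤
        |bval β N c - bval β N c'| ^ r := by
      rw [← div_eq_mul_inv]
      exact Real.rpow_le_rpow (by positivity) hg hr.le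
    rw [Real.mul_rpow hκ.le (by positivity)] at h2
    rw [div_mul_eq_mul_div, le_div_iff₀ (by positivity), mul_assoc]
    refine mul_le_mul_of_nonneg_left ?_ hC
    rw [mul_comm]; exact h2
end

def isSpec (p : ℕ → ℕ) (J0 q : ℕ) : Prop := ∃ j, p j ≤ q ∧ q ≤ p j + (j + J0)

noncomputable def insY (η : ℕ → ℝ) (i : ℕ) : ℝ := if i < 3 then 0 else η (i - 3)

open Classical in
noncomputable def insX (p : ℕ → ℕ) (J0 : ℕ) (ξ η : ℕ → ℝ) (q : ℕ) : ℝ :=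
  if h : isSpec p J0 q then
    (if q - p h.choose < h.choose + J0 then insY η (q - p h.choose) else 0)
  else ξ (Nat.count (fun q => ¬ isSpec p J0 q) q)

section
variable {p : ℕ → ℕ} {J0 : ℕ}

lemma p_lt_of_lt (hp : ∀ j, p j + (j + J0) + 1 < p (j + 1)) : ∀ {i j : ℕ}, i < j →
    p i + (i + J0) + 1 < p j := by
  have hm : StrictMono p := strictMono_nat_of_lt_succ fun j => by have := hp j; omega
  intro i j hij
  have : p (i + 1) ≤ p j := hm.monotone hij
  have := hp i
  omega

lemma spec_unique (hp : ∀ j, p j + (j + J0) + 1 < p (j + 1)) {q i j : ℕ}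
    (hi : p i ≤ q ∧ q ≤ p i + (i + J0)) (hj : p j ≤ q ∧ q ≤ p j + (j + J0)) : i = j := by
  rcases lt_trichotomy i j with h | h | h
  · have := p_lt_of_lt hp h; omega
  · exact h
  · have := p_lt_of_lt hp h; omega

lemma insX_spec (hp : ∀ j, p j + (j + J0) + 1 < p (j + 1)) (ξ η : ℕ → ℝ) (j i : ℕ)
    (hi : i ≤ j + J0) :
    insX p J0 ξ η (p j + i) = if i < j + J0 then insY η i else 0 := by
  have hs : p j ≤ p j + i ∧ p j + i ≤ p j + (j + J0) := by omega
  have h : isSpec p J0 (p j + i) := ⟨j, hs⟩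
  have e : h.choose = j := spec_unique hp h.choose_spec hs
  unfold insX
  rw [dif_pos h, e]
  simp

open Classical in
lemma insX_free (ξ η : ℕ → ℝ) {q : ℕ} (hq : ¬ isSpec p J0 q) :
    insX p J0 ξ η q = ξ (Nat.count (fun q => ¬ isSpec p J0 q) q) := by
  unfold insX
  rw [dif_neg hq]

lemma insX_zero_zero (hJ : 4 ≤ J0) (hp : ∀ j, p j + (j + J0) + 1 < p (j + 1)) {ξ η : ℕ → ℝ}
    (hξ : ∀ i, ξ i ≠ 0) (hη : ∀ i, η i ≠ 0) {q : ℕ} (h0 : insX p J0 ξ η q = 0)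
    (h1 : insX p J0 ξ η (q + 1) = 0) : ∃ j, q = p j ∨ q = p j + 1 := by
  have hsp : isSpec p J0 q := by
    by_contra h
    rw [insX_free _ _ h] at h0
    exact hξ _ h0
  obtain ⟨j, hj1, hj2⟩ := hsp
  obtain ⟨i, rfl⟩ := Nat.exists_eq_add_of_le hj1
  refine ⟨j, ?_⟩
  have hi : i ≤ j + J0 := by omega
  rcases Nat.lt_or_ge i (j + J0) with hlt | hge
  · rw [insX_spec hp _ _ _ _ hi, if_pos hlt] at h0
    have hi3 : i < 3 := by
      by_contra h
      rw [insY, if_neg h] at h0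
      exact hη _ h0
    have : i ≠ 2 := by
      rintro rfl
      rw [add_assoc, insX_spec hp _ _ _ _ (by omega), if_pos (by omega)] at h1
      simp [insY] at h1
      exact hη _ h1
    omega
  · exfalso
    have hns : ¬ isSpec p J0 (p j + i + 1) := by
      rintro ⟨k, hk1, hk2⟩
      rcases lt_trichotomy k j with h | h | h
      · have := p_lt_of_lt hp h; omega
      · subst h; omega
      · have := p_lt_of_lt hp h; omega
    rw [insX_free _ _ hns] at h1
    exact hξ _ h1

lemma exists_of_lt_count {P : ℕ → Prop} [DecidablePred P] {i q : ℕ} (h : i < Nat.count P q) :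
    ∃ m < q, P m ∧ Nat.count P m = i := by
  induction q with
  | zero => simp at h
  | succ q ih =>
    rw [Nat.count_succ] at h
    by_cases h' : i < Nat.count P q
    · obtain ⟨m, hm, h2⟩ := ih h'
      exact ⟨m, by omega, h2⟩
    · split_ifs at h with hP
      · exact ⟨q, by omega, hP, by omega⟩
      · omega

open Classical in
lemma insX_agree {ξ η ξ' η' : ℕ → ℝ} {q : ℕ}
    (h : ∀ i < q, insX p J0 ξ η i = insX p J0 ξ' η' i) :
    ∀ i < Nat.count (fun q => ¬ isSpec p J0 q) q, ξ i = ξ' i := by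
  intro i hi
  obtain ⟨m, hm, hP, hc⟩ := exists_of_lt_count hi
  have := h m hm
  rwa [insX_free _ _ hP, insX_free _ _ hP, hc] at this

lemma insY_agree {η η' : ℕ → ℝ} {q : ℕ}
    (h : ∀ i < q, insY η i = insY η' i) : ∀ i < q - 3, η i = η' i := by
  intro i hi
  have := h (i + 3) (by omega)
  simpa [insY] using this

open Classical in
lemma count_spec_le {q j : ℕ} (hp : ∀ j, p j + (j + J0) + 1 < p (j + 1)) (hq : q ≤ p (j + 1)) :
    Nat.count (fun q => isSpec p J0 q) q ≤ (j + 1) * (j + J0 + 1) := by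
  rw [Nat.count_eq_card_filter_range]
  have hsub : (Finset.range q).filter (fun q => isSpec p J0 q) ⊆
      (Finset.range (j + 1)).biUnion (fun i => Finset.Icc (p i) (p i + (i + J0))) := by
    intro x hx
    simp only [Finset.mem_filter, Finset.mem_range, Finset.mem_biUnion, Finset.mem_Icc] at hx ⊢
    obtain ⟨hx, i, h1, h2⟩ := hx
    refine ⟨i, ?_, h1, h2⟩
    by_contra hc
    have hm : StrictMono p := strictMono_nat_of_lt_succ fun j => by have := hp j; omega
    have : p (j + 1) ≤ p i := hm.monotone (by omega)
    omega
  refine (Finset.card_le_card hsub).trans (Finset.card_biUnion_le.trans ?_)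
  calc _ ≤ ∑ i ∈ Finset.range (j+1), (j + J0 + 1) := by
        refine Finset.sum_le_sum fun i hi => ?_
        simp only [Nat.card_Icc]
        have := Finset.mem_range.1 hi
        omega
    _ = _ := by simp

open Classical in
lemma count_free_ge (hp : ∀ j, p j + (j + J0) + 1 < p (j + 1)) {ε C : ℝ} (hε : 0 ≤ ε)
    (hC : 0 ≤ C)
    (h : ∀ j : ℕ, ((j : ℝ) + 1) * (j + J0 + 1) ≤ C + ε * p j) (q : ℕ) :
    (q : ℝ) - (C + (J0 + 1)) - ε * q ≤ Nat.count (fun q => ¬ isSpec p J0 q) q := by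
  have hsum : Nat.count (fun q => isSpec p J0 q) q + Nat.count (fun q => ¬ isSpec p J0 q) q = q := by
    rw [Nat.count_eq_card_filter_range, Nat.count_eq_card_filter_range,
      Finset.card_filter_add_card_filter_not, Finset.card_range]
  have hm : StrictMono p := strictMono_nat_of_lt_succ fun j => by have := hp j; omega
  have hb : (Nat.count (fun q => isSpec p J0 q) q : ℝ) ≤ C + (J0 + 1) + ε * q := by
    have hex : ∃ j, q ≤ p j := ⟨q, hm.le_apply⟩
    have hs := Nat.find_spec hex
    rcases hj : Nat.find hex with _ | j
    · rw [hj] at hs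
      have := count_spec_le (q := q) (j := 0) hp (hs.trans (hm.monotone (by omega)))
      have h2 : (Nat.count (fun q => isSpec p J0 q) q : ℝ) ≤ J0 + 1 := by
        have h3 : Nat.count (fun q => isSpec p J0 q) q ≤ J0 + 1 := by linarith
        exact_mod_cast h3
      have : 0 ≤ ε * q := by positivity
      linarith
    · rw [hj] at hs
      have hlt : p j < q := by
        have := Nat.find_min hex (m := j) (by omega)
        omega
      have h1 := count_spec_le hp hs
      have h2 : (Nat.count (fun q => isSpec p J0 q) q : ℝ) ≤ ((j : ℝ) + 1) * (j + J0 + 1) := by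
        exact_mod_cast h1
      have h3 : ε * p j ≤ ε * q := by
        gcongr
      have := h j
      have : (0:ℝ) ≤ J0 := by positivity
      linarith
  have : (Nat.count (fun q => isSpec p J0 q) q : ℝ) + Nat.count (fun q => ¬ isSpec p J0 q) q = q := by
    exact_mod_cast hsum
  linarith

end

section
variable {β : ℝ} {N : ℕ} {p : ℕ → ℕ} {J0 : ℕ} {ξ η : ℕ → ℝ}

lemma insY_mem (hβ : 1 < β) (hη : ∀ i, η i ∈ fullF β N) (i : ℕ) : insY η i ∈ fullF β N := by
  unfold insY; split_ifs
  · exact zero_mem_fullF hβ N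
  · exact hη _

lemma insX_mem (hβ : 1 < β) (hξ : ∀ i, ξ i ∈ fullF β N) (hη : ∀ i, η i ∈ fullF β N) (i : ℕ) :
    insX p J0 ξ η i ∈ fullF β N := by
  unfold insX; split_ifs
  · exact insY_mem hβ hη _
  · exact zero_mem_fullF hβ N
  · exact hξ _

lemma betaDigit_zero (β : ℝ) (i : ℕ) : betaDigit β 0 i = 0 := by
  have : (betaT β)^[i] 0 = 0 := by
    induction i with
    | zero => rfl
    | succ i ih => rw [Function.iterate_succ_apply', ih]; simp [betaT]
  simp [betaDigit, this]

lemma zero_of_block {β : ℝ} {N : ℕ} (hβ : 1 < β) {a : ℝ} (ha : a ∈ fullF β N)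
    (h : ∀ i < N + 1, betaDigit β a i = 0) : a = 0 :=
  fullF_zero_of_digits hβ N a ha fun i hi => h i (by omega)

lemma match_pos (hβ : 1 < β) (hJ : 4 ≤ J0) (hp : ∀ j, p j + (j + J0) + 1 < p (j + 1))
    (hξ : ∀ i, ξ i ∈ fullF β N) (hη : ∀ i, η i ∈ fullF β N)
    (hξ0 : ∀ i, ξ i ≠ 0) (hη0 : ∀ i, η i ≠ 0) (m : ℕ)
    (hm : ∀ i < 4 * (N + 1), betaDigit β (bval β N (insX p J0 ξ η)) (m + i) =
      betaDigit β (bval β N (insY η)) i) : ∃ j, m = p j * (N + 1) := by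
  have hX := insX_mem (p := p) (J0 := J0) hβ hξ hη
  have hY := insY_mem hβ hη
  set L := N + 1 with hL
  have hLpos : 0 < L := by omega
  set A := betaDigit β (bval β N (insX p J0 ξ η)) with hA
  set B := betaDigit β (bval β N (insY η)) with hB
  have dA : ∀ q i, i < L → A (q * L + i) = betaDigit β (insX p J0 ξ η q) i :=
    fun q i hi => bval_digit hβ hX q i hi
  have dB : ∀ q i, i < L → B (q * L + i) = betaDigit β (insY η q) i :=
    fun q i hi => bval_digit hβ hY q i hi
  -- zeros of B
  have B0 : ∀ i < 3 * L, B i = 0 := by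
    intro i hi
    have h1 : i / L < 3 := Nat.div_lt_of_lt_mul (by linarith)
    have h2 := Nat.div_add_mod' i L
    rw [← h2, dB _ _ (Nat.mod_lt _ hLpos)]
    simp [insY, h1, betaDigit_zero]
  have B3 : ∀ i < L, B (3 * L + i) = betaDigit β (η 0) i := by
    intro i hi; rw [dB 3 i hi]; simp [insY]
  have hex : ∃ h, h < L ∧ betaDigit β (η 0) h ≠ 0 := by
    by_contra hno; push Not at hno
    exact hη0 0 (zero_of_block hβ (hη 0) hno)
  classical
  have hh := Nat.find_spec hex
  have hmin : ∀ i < Nat.find hex, betaDigit β (η 0) i = 0 := by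
    intro i hi
    have := Nat.find_min hex hi
    by_contra hne
    exact this ⟨by omega, hne⟩
  set h := Nat.find hex
  have B1 : B (3 * L + h) ≠ 0 := by rw [B3 _ hh.1]; exact hh.2
  have B2 : ∀ i < 3 * L + h, B i = 0 := by
    intro i hi
    rcases Nat.lt_or_ge i (3 * L) with h' | h'
    · exact B0 i h'
    · obtain ⟨k, rfl⟩ := Nat.exists_eq_add_of_le h'
      rw [B3 k (by omega)]; exact hmin k (by omega)
  obtain ⟨q, hq1, hq2⟩ : ∃ q, m ≤ q * L ∧ q * L < m + L := by
    refine ⟨(m + N) / L, ?_, ?_⟩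
    · have := Nat.div_add_mod' (m + N) L
      have := Nat.mod_lt (m + N) hLpos
      omega
    · have := Nat.div_mul_le_self (m + N) L
      omega
  have z0 : insX p J0 ξ η q = 0 := by
    refine zero_of_block hβ (hX q) fun i hi => ?_
    rw [← dA q i hi, show q * L + i = m + (q * L - m + i) by omega, hm _ (by omega)]
    exact B0 _ (by omega)
  have z1 : insX p J0 ξ η (q + 1) = 0 := by
    refine zero_of_block hβ (hX (q + 1)) fun i hi => ?_
    have e : (q + 1) * L = q * L + L := by ring
    rw [← dA (q + 1) i hi, e, show q * L + L + i = m + (q * L + L - m + i) by omega, hm _ (by omega)]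
    exact B0 _ (by omega)
  obtain ⟨j, hj⟩ := insX_zero_zero hJ hp hξ0 hη0 z0 z1
  refine ⟨j, ?_⟩
  have AP : ∀ i < 4 * L, A (p j * L + i) = B i := by
    intro i hi
    have h1 : i / L < 4 := Nat.div_lt_of_lt_mul (by linarith)
    have h2 := Nat.div_add_mod' i L
    have h3 := Nat.mod_lt i hLpos
    rw [← h2, dB _ _ h3, ← add_assoc, ← Nat.add_mul, dA _ _ h3,
      insX_spec hp _ _ _ _ (by omega), if_pos (by omega)]
  have hqj : p j * L ≤ q * L ∧ q * L ≤ p j * L + L := by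
    rcases hj with hj | hj
    · subst hj; omega
    · subst hj; rw [Nat.add_mul]; omega
  rcases lt_trichotomy m (p j * L) with hlt | heq | hgt
  · exfalso
    apply B1
    rw [← hm _ (by omega), show m + (3 * L + h) = p j * L + (m + (3 * L + h) - p j * L) by omega,
      AP _ (by omega)]
    exact B2 _ (by omega)
  · exact heq
  · exfalso
    apply B1
    rw [← AP _ (by omega), show p j * L + (3 * L + h) = m + (p j * L + (3 * L + h) - m) by omega,
      hm _ (by omega)]
    exact B2 _ (by omega)

lemma match_short (hβ : 1 < β) (hJ : 4 ≤ J0) (hp : ∀ j, p j + (j + J0) + 1 < p (j + 1))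
    (hξ : ∀ i, ξ i ∈ fullF β N) (hη : ∀ i, η i ∈ fullF β N) (hη0 : ∀ i, η i ≠ 0) (j : ℕ)
    (hm : ∀ i < (j + J0 + 1) * (N + 1),
      betaDigit β (bval β N (insX p J0 ξ η)) (p j * (N + 1) + i) =
      betaDigit β (bval β N (insY η)) i) : False := by
  have hX := insX_mem (p := p) (J0 := J0) hβ hξ hη
  have hY := insY_mem hβ hη
  refine hη0 (j + J0 - 3) (zero_of_block hβ (hη _) fun i hi => ?_)
  have h1 := hm ((j + J0) * (N + 1) + i) (by nlinarith)
  rw [bval_digit hβ hY _ _ hi, ← add_assoc, ← Nat.add_mul, bval_digit hβ hX _ _ hi,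
    insX_spec hp _ _ _ _ le_rfl, if_neg (by omega), betaDigit_zero, insY, if_neg (by omega)] at h1
  exact h1.symm

lemma match_long (hβ : 1 < β) (hp : ∀ j, p j + (j + J0) + 1 < p (j + 1))
    (hξ : ∀ i, ξ i ∈ fullF β N) (hη : ∀ i, η i ∈ fullF β N) (j : ℕ) :
    ∀ i < (j + J0) * (N + 1), betaDigit β (bval β N (insX p J0 ξ η)) (p j * (N + 1) + i) =
      betaDigit β (bval β N (insY η)) i := by
  have hX := insX_mem (p := p) (J0 := J0) hβ hξ hη
  have hY := insY_mem hβ hη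
  intro i hi
  have h1 : i / (N + 1) < j + J0 := Nat.div_lt_of_lt_mul (by linarith)
  have h2 := Nat.div_add_mod' i (N + 1)
  have h3 := Nat.mod_lt i (show 0 < N + 1 by omega)
  rw [← h2, bval_digit hβ hY _ _ h3, ← add_assoc, ← Nat.add_mul, bval_digit hβ hX _ _ h3,
      insX_spec hp _ _ _ _ (by omega), if_pos (by omega)]

lemma waiting_bounds (hβ : 1 < β) (hJ : 4 ≤ J0) (hp : ∀ j, p j + (j + J0) + 1 < p (j + 1))
    (hξ : ∀ i, ξ i ∈ fullF β N) (hη : ∀ i, η i ∈ fullF β N)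
    (hξ0 : ∀ i, ξ i ≠ 0) (hη0 : ∀ i, η i ≠ 0) (j n : ℕ)
    (hn1 : (j + J0) * (N + 1) < n) (hn2 : n ≤ (j + 1 + J0) * (N + 1)) :
    ∃ w : ℕ, p j * (N + 1) ≤ w ∧ w ≤ p (j + 1) * (N + 1) ∧ 
      waitingRatio β (bval β N (insX p J0 ξ η)) (bval β N (insY η)) n =
        ((Real.log w / n : ℝ) : EReal) := by
  set x := bval β N (insX p J0 ξ η)
  set y := bval β N (insY η)
  set S := {m : ℕ | 1 ≤ m ∧ ∀ i, i < n → betaDigit β ((betaT β)^[m] x) i = betaDigit β y i} with hS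
  have hmem : p (j + 1) * (N + 1) ∈ S := by
    refine ⟨?_, fun i hi => ?_⟩
    · have := hp j
      have : 1 ≤ p (j + 1) := by omega
      nlinarith
    · rw [betaDigit_add]
      exact match_long hβ hp hξ hη (j + 1) i (by omega)
  have hlow : ∀ m ∈ S, p j * (N + 1) ≤ m := by
    rintro m ⟨-, hm⟩
    simp only [betaDigit_add] at hm
    obtain ⟨i, rfl⟩ := match_pos hβ hJ hp hξ hη hξ0 hη0 m (fun i hi => hm i (by nlinarith))
    have hij : j ≤ i := by
      by_contra hc
      refine match_short hβ hJ hp hξ hη hη0 i fun k hk => hm k ?_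
      have : (i + J0 + 1) * (N + 1) ≤ (j + J0) * (N + 1) := Nat.mul_le_mul_right _ (by omega)
      omega
    have hmono : StrictMono p := strictMono_nat_of_lt_succ fun j => by have := hp j; omega
    exact Nat.mul_le_mul_right _ (hmono.monotone hij)
  have hW : waitingTime β x y n = ((sInf S : ℕ) : ℕ∞) := by
    apply le_antisymm
    · have := Nat.sInf_mem (s := S) ⟨_, hmem⟩
      exact sInf_le ⟨sInf S, rfl, this.1, this.2⟩
    · refine le_sInf ?_
      rintro k ⟨m, rfl, h1, h2⟩
      exact_mod_cast Nat.sInf_le (s := S) ⟨h1, h2⟩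
  refine ⟨sInf S, hlow _ (Nat.sInf_mem ⟨_, hmem⟩), Nat.sInf_le hmem, ?_⟩
  unfold waitingRatio
  have hne : waitingTime β x y n ≠ ⊤ := by rw [hW]; exact ENat.natCast_ne_top _
  rw [dif_neg hne]
  congr 4
  have : ((waitingTime β x y n).untop hne : ℕ∞) = ((sInf S : ℕ) : ℕ∞) := by
    rw [← hW]; exact WithTop.coe_untop _ _
  exact_mod_cast this
end

noncomputable def rhoF (u v t : ℝ) : ℝ := (u + v) / 2 + (v - u) / 2 * Real.sin (u / v * Real.log t)

section
variable {u v : ℝ}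

lemma rhoF_mem (huv : u ≤ v) (t : ℝ) : u ≤ rhoF u v t ∧ rhoF u v t ≤ v := by
  unfold rhoF
  have h1 := Real.neg_one_le_sin (u / v * Real.log t)
  have h2 := Real.sin_le_one (u / v * Real.log t)
  constructor <;> nlinarith

lemma gF_deriv {t : ℝ} (ht : 0 < t) :
    HasDerivAt (fun t => t * rhoF u v t)
      (rhoF u v t + (v - u) / 2 * (u / v) * Real.cos (u / v * Real.log t)) t := by
  have h1 : HasDerivAt (fun t => u / v * Real.log t) (u / v * t⁻¹) t :=
    (Real.hasDerivAt_log ht.ne').const_mul _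
  have h2 := ((h1.sin.const_mul ((v - u) / 2)).const_add ((u + v) / 2))
  have h3 := (hasDerivAt_id t).mul h2
  convert! h3 using 1
  simp only [rhoF, id]
  field_simp

lemma gF_bounds (hu : 0 < u) (huv : u ≤ v) {s t : ℝ} (hs : 0 < s) (hst : s ≤ t) :
    u / 2 * (t - s) ≤ t * rhoF u v t - s * rhoF u v s ∧
    t * rhoF u v t - s * rhoF u v s ≤ 2 * v * (t - s) := by
  have hv : 0 < v := by linarith
  have hD : Convex ℝ (Set.Ioi (0:ℝ)) := convex_Ioi 0
  have hc : ContinuousOn (fun t => t * rhoF u v t) (Set.Ioi 0) :=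
    fun x hx => (gF_deriv hx).continuousAt.continuousWithinAt
  have hd : DifferentiableOn ℝ (fun t => t * rhoF u v t) (interior (Set.Ioi 0)) := by
    rw [interior_Ioi]
    exact fun x hx => (gF_deriv hx).differentiableAt.differentiableWithinAt
  have key : ∀ x ∈ interior (Set.Ioi (0:ℝ)), u / 2 ≤ deriv (fun t => t * rhoF u v t) x ∧
      deriv (fun t => t * rhoF u v t) x ≤ 2 * v := by
    intro x hx
    rw [interior_Ioi] at hx
    rw [(gF_deriv hx).deriv]
    have hr := rhoF_mem huv x
    have h1 := Real.neg_one_le_cos (u / v * Real.log x)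
    have h2 := Real.cos_le_one (u / v * Real.log x)
    have h3 : (v - u) / 2 * (u / v) ≤ u / 2 := by
      rw [div_mul_div_comm, div_le_div_iff₀ (by positivity) (by positivity)]
      nlinarith [mul_pos hu hu]
    have h4 : 0 ≤ (v - u) / 2 * (u / v) := mul_nonneg (by linarith) (by positivity)
    constructor <;> nlinarith
  exact ⟨hD.mul_sub_le_image_sub_of_le_deriv hc hd (fun x hx => (key x hx).1) s hs t (lt_of_lt_of_le hs hst) hst,
    hD.image_sub_le_mul_sub_of_deriv_le hc hd (fun x hx => (key x hx).2) s hs t (lt_of_lt_of_le hs hst) hst⟩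

lemma sq_small (hu : 0 < u) {ε : ℝ} (hε : 0 < ε) :
    ∀ᶠ k : ℕ in atTop, ((k : ℝ) + 1) ^ 2 ≤ ε * Real.exp (u * k) := by
  have h1 : Tendsto (fun x : ℝ => Real.exp (u * x) / x ^ (2:ℝ)) atTop atTop :=
    tendsto_exp_mul_div_rpow_atTop 2 u hu
  have h2 := (h1.comp tendsto_natCast_atTop_atTop).eventually_ge_atTop (4 / ε)
  filter_upwards [h2, eventually_ge_atTop 1] with k hk hk1
  have hk1' : (1:ℝ) ≤ k := by exact_mod_cast hk1
  simp only [Function.comp, Real.rpow_two] at hk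
  rw [div_le_div_iff₀ hε (by positivity)] at hk
  nlinarith

lemma exists_p (hu : 0 < u) (huv : u ≤ v) (L : ℕ) (hL : 1 ≤ L) :
    ∃ (p : ℕ → ℕ) (J0 : ℕ), 4 ≤ J0 ∧ (∀ j, p j + (j + J0) + 1 < p (j + 1)) ∧
      (∀ ε > (0:ℝ), ∃ C : ℝ, 0 ≤ C ∧ ∀ j : ℕ, ((j : ℝ) + 1) * (j + J0 + 1) ≤ C + ε * p j) ∧
      ∃ K : ℝ, ∀ j n w : ℕ, (j + J0) * L < n → n ≤ (j + 1 + J0) * L → p j * L ≤ w →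
        w ≤ p (j + 1) * L → |Real.log w - n * rhoF u v n| ≤ K := by
  have hv : 0 < v := by linarith
  obtain ⟨J1, hJ1⟩ := eventually_atTop.1 (sq_small hu (half_pos hu))
  set J0 := max J1 4 with hJ0
  set G : ℕ → ℝ := fun k => ((k * L : ℕ) : ℝ) * rhoF u v ((k * L : ℕ) : ℝ) with hG
  have hL' : (1:ℝ) ≤ L := by exact_mod_cast hL
  have hGlow : ∀ k : ℕ, u * k ≤ G k := by
    intro k
    have := (rhoF_mem huv ((k * L : ℕ) : ℝ)).1
    have hk : (0:ℝ) ≤ k := by positivity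
    have h1 : (k:ℝ) ≤ ((k * L : ℕ) : ℝ) := by push_cast; nlinarith
    simp only [hG]
    nlinarith
  have hE1 : ∀ k : ℕ, 1 ≤ Real.exp (G k) := fun k => by
    apply Real.one_le_exp
    have := hGlow k
    have : 0 ≤ u * k := by positivity
    linarith
  set p : ℕ → ℕ := fun j => ⌊Real.exp (G (j + J0))⌋₊ with hp
  have p1 : ∀ j, 1 ≤ p j := fun j => Nat.le_floor (by simpa using hE1 (j + J0))
  have pup : ∀ j, (p j : ℝ) ≤ Real.exp (G (j + J0)) := fun j => Nat.floor_le (Real.exp_pos _).le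
  have plow : ∀ j, Real.exp (G (j + J0)) < p j + 1 := fun j => Nat.lt_floor_add_one _
  have plow2 : ∀ j, Real.exp (G (j + J0)) / 2 ≤ p j := fun j => by
    have h1 := plow j
    have h2 : (1:ℝ) ≤ p j := by exact_mod_cast p1 j
    linarith
  refine ⟨p, J0, le_max_right _ _, ?_, ?_, ?_⟩
  · intro j
    set k := j + J0 with hk
    have hk1 : J1 ≤ k := by omega
    have e : j + 1 + J0 = k + 1 := by omega
    have hs := hJ1 k hk1
    have hk4 : (4:ℝ) ≤ k := by
      have : 4 ≤ k := by omega
      exact_mod_cast this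
    have h1 : G k + u / 2 ≤ G (k + 1) := by
      have := (gF_bounds hu huv (s := ((k * L : ℕ) : ℝ)) (t := (((k + 1) * L : ℕ) : ℝ))
        (by push_cast; nlinarith) (by push_cast; nlinarith)).1
      simp only [hG]
      have e : (((k + 1) * L : ℕ) : ℝ) - ((k * L : ℕ) : ℝ) = L := by push_cast; ring
      rw [e] at this
      nlinarith
    have h2 : Real.exp (G k) * (1 + u / 2) ≤ Real.exp (G (k + 1)) := by
      calc _ ≤ Real.exp (G k) * Real.exp (u / 2) := by
            gcongr
            linarith [Real.add_one_le_exp (u / 2)]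
        _ = Real.exp (G k + u / 2) := (Real.exp_add _ _).symm
        _ ≤ _ := Real.exp_le_exp.2 h1
    have h3 : Real.exp (u * k) ≤ Real.exp (G k) := Real.exp_le_exp.2 (hGlow k)
    have h4 := pup j
    have h5 := plow (j + 1)
    rw [e] at h5
    have h6 : (p j : ℝ) + k + 1 < p (j + 1) := by nlinarith
    exact_mod_cast h6
  · intro ε hε
    obtain ⟨K0, hK0⟩ := eventually_atTop.1 (sq_small hu (half_pos hε))
    refine ⟨((K0:ℝ) + 1) ^ 2, by positivity, fun j => ?_⟩
    have hle : ((j:ℝ) + 1) * (j + J0 + 1) ≤ (((j + J0 : ℕ) : ℝ) + 1) ^ 2 := by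
      push_cast
      have : (0:ℝ) ≤ J0 := by positivity
      have : (0:ℝ) ≤ j := by positivity
      nlinarith [mul_nonneg ‹(0:ℝ) ≤ J0› ‹(0:ℝ) ≤ j›]
    refine hle.trans ?_
    rcases Nat.lt_or_ge (j + J0) K0 with h | h
    · have h' : ((j + J0 : ℕ) : ℝ) ≤ K0 := by exact_mod_cast h.le
      have : (((j + J0 : ℕ) : ℝ) + 1) ^ 2 ≤ ((K0:ℝ) + 1) ^ 2 := by gcongr
      have : 0 ≤ ε * p j := by positivity
      linarith
    · have h1 := hK0 _ h
      have h2 := plow2 j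
      have h3 : Real.exp (u * (j + J0 : ℕ)) ≤ Real.exp (G (j + J0)) := Real.exp_le_exp.2 (hGlow _)
      have : 0 ≤ ((K0:ℝ) + 1) ^ 2 := by positivity
      nlinarith
  · refine ⟨2 * v * L + Real.log 2 + Real.log L, fun j n w hn1 hn2 hw1 hw2 => ?_⟩
    have hlogL : 0 ≤ Real.log L := Real.log_nonneg hL'
    have hlog2 : 0 ≤ Real.log 2 := Real.log_nonneg (by norm_num)
    set k := j + J0 with hk
    have e : j + 1 + J0 = k + 1 := by omega
    rw [e] at hn2
    have hk4 : 4 ≤ k := by omega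
    have hkL : 0 < k * L := by positivity
    have hkL' : (0:ℝ) < ((k * L : ℕ) : ℝ) := by exact_mod_cast hkL
    have hn1' : ((k * L : ℕ) : ℝ) ≤ n := by exact_mod_cast hn1.le
    have hn2' : (n : ℝ) ≤ (((k + 1) * L : ℕ) : ℝ) := by exact_mod_cast hn2
    have e2 : (((k + 1) * L : ℕ) : ℝ) - ((k * L : ℕ) : ℝ) = L := by push_cast; ring
    have b1 := (gF_bounds hu huv hkL' hn1').2
    have b2 := (gF_bounds hu huv (hkL'.trans_le hn1') hn2').2
    have c1 : 2 * v * ((n:ℝ) - ((k * L : ℕ) : ℝ)) ≤ 2 * v * L := by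
      apply mul_le_mul_of_nonneg_left _ (by positivity); linarith
    have c2 : 2 * v * ((((k + 1) * L : ℕ) : ℝ) - n) ≤ 2 * v * L := by
      apply mul_le_mul_of_nonneg_left _ (by positivity); linarith
    have hw1' : (p j : ℝ) * L ≤ w := by exact_mod_cast hw1
    have hw2' : (w : ℝ) ≤ p (j + 1) * L := by exact_mod_cast hw2
    have l1 : G k - Real.log 2 ≤ Real.log w := by
      rw [← Real.log_exp (G k), ← Real.log_div (Real.exp_pos _).ne' two_ne_zero]
      apply Real.log_le_log (by positivity)
      have := plow2 j
      have : (0:ℝ) ≤ p j := by positivity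
      nlinarith
    have hwpos : (0:ℝ) < w := by
      have : (1:ℝ) ≤ p j := by exact_mod_cast p1 j
      nlinarith
    have l2 : Real.log w ≤ G (k + 1) + Real.log L := by
      rw [← Real.log_exp (G (k + 1)), ← Real.log_mul (Real.exp_pos _).ne' (by linarith)]
      apply Real.log_le_log hwpos
      have := pup (j + 1)
      rw [e] at this
      nlinarith
    simp only [hG] at l1 l2
    rw [abs_le]; constructor <;> linarith

lemma rho_subseq (hu : 0 < u) (huv : u ≤ v) {s : ℝ} (hs : s ∈ Set.Icc u v) :
    ∃ φ : ℕ → ℕ, Tendsto φ atTop atTop ∧ Tendsto (fun k => rhoF u v (φ k)) atTop (nhds s) := by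
  have hv : 0 < v := by linarith
  obtain ⟨θ, hθ⟩ : ∃ θ, (u + v) / 2 + (v - u) / 2 * Real.sin θ = s := by
    rcases huv.eq_or_lt with h | h
    · subst h; refine ⟨0, ?_⟩
      have := le_antisymm hs.1 hs.2
      simp; linarith
    · have hpos : 0 < (v - u) / 2 := by linarith
      refine ⟨Real.arcsin ((s - (u + v) / 2) / ((v - u) / 2)), ?_⟩
      rw [Real.sin_arcsin]
      · field_simp; ring
      · rw [le_div_iff₀ hpos]; linarith [hs.1]
      · rw [div_le_iff₀ hpos]; linarith [hs.2]
  set δ := u / v with hδ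
  have hδ0 : 0 < δ := by positivity
  set a : ℕ → ℝ := fun k => (θ + k * (2 * Real.pi)) / δ with ha
  have haT : Tendsto a atTop atTop := by
    apply Tendsto.atTop_div_const hδ0
    apply tendsto_atTop_add_const_left
    exact tendsto_natCast_atTop_atTop.atTop_mul_const (by positivity)
  set E : ℕ → ℝ := fun k => Real.exp (a k) with hE
  have hET : Tendsto E atTop atTop := Real.tendsto_exp_atTop.comp haT
  refine ⟨fun k => ⌈E k⌉₊, tendsto_nat_ceil_atTop.comp hET, ?_⟩
  have hb : ∀ k, |rhoF u v (⌈E k⌉₊ : ℕ) - s| ≤ (v - u) / 2 * (δ * (E k)⁻¹) := by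
    intro k
    have hEpos : 0 < E k := Real.exp_pos _
    have c1 : E k ≤ ⌈E k⌉₊ := Nat.le_ceil _
    have c2 : (⌈E k⌉₊ : ℝ) < E k + 1 := Nat.ceil_lt_add_one hEpos.le
    have l0 : Real.log (E k) = a k := Real.log_exp _
    have l1 : a k ≤ Real.log ⌈E k⌉₊ := by
      rw [← l0]; exact Real.log_le_log hEpos c1
    have l2 : Real.log ⌈E k⌉₊ - a k ≤ (E k)⁻¹ := by
      rw [← l0, ← Real.log_div (by linarith) hEpos.ne']
      refine (Real.log_le_sub_one_of_pos (by positivity)).trans ?_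
      rw [sub_le_iff_le_add, div_le_iff₀ hEpos, add_mul, inv_mul_cancel₀ hEpos.ne']
      linarith
    have s1 : Real.sin θ = Real.sin (δ * a k) := by
      have : δ * a k = θ + k * (2 * Real.pi) := by simp only [ha]; field_simp
      rw [this, Real.sin_add_nat_mul_two_pi]
    rw [← hθ, s1, rhoF, add_sub_add_left_eq_sub, ← mul_sub, abs_mul,
      abs_of_nonneg (show 0 ≤ (v - u) / 2 by linarith)]
    refine mul_le_mul_of_nonneg_left ?_ (by linarith)
    have s2 : |Real.sin (δ * Real.log ⌈E k⌉₊) - Real.sin (δ * a k)| ≤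
        |δ * Real.log ⌈E k⌉₊ - δ * a k| := Real.abs_sin_sub_sin_le _ _
    refine s2.trans ?_
    rw [← mul_sub, abs_mul, abs_of_pos hδ0, abs_of_nonneg (by linarith)]
    exact mul_le_mul_of_nonneg_left l2 hδ0.le
  rw [tendsto_iff_dist_tendsto_zero]
  have hz : Tendsto (fun k => (v - u) / 2 * (δ * (E k)⁻¹)) atTop (nhds 0) := by
    have := ((tendsto_inv_atTop_zero.comp hET).const_mul δ).const_mul ((v - u) / 2)
    simpa using this
  exact squeeze_zero (fun _ => dist_nonneg) (fun k => by rw [Real.dist_eq]; exact hb k) hz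

lemma cluster_set (hu : 0 < u) (huv : u ≤ v) {a : ℕ → EReal} {K : ℝ} {n0 : ℕ}
    (h : ∀ n > n0, ∃ t : ℝ, a n = t ∧ |t - rhoF u v n| ≤ K / n) :
    {t : EReal | MapClusterPt t Filter.atTop a} = Real.toEReal '' Set.Icc u v := by
  have hK : Tendsto (fun n : ℕ => K / n) atTop (nhds 0) := tendsto_const_div_atTop_nhds_zero_nat K
  have hEx : ∀ n, ∃ t : ℝ, n > n0 → a n = t ∧ |t - rhoF u v n| ≤ K / n := by
    intro n
    by_cases hn : n > n0
    · obtain ⟨t, ht⟩ := h n hn; exact ⟨t, fun _ => ht⟩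
    · exact ⟨0, fun h => absurd h hn⟩
  choose w hw using hEx
  ext t
  simp only [Set.mem_ofPred_eq, Set.mem_image]
  constructor
  · intro ht
    have hbd : ∀ ε > (0:ℝ), ((u - ε : ℝ) : EReal) ≤ t ∧ t ≤ ((v + ε : ℝ) : EReal) := by
      intro ε hε
      have hev : ∀ᶠ n in atTop, a n ∈ Set.Icc ((u - ε : ℝ) : EReal) ((v + ε : ℝ) : EReal) := by
        filter_upwards [eventually_gt_atTop n0, hK.eventually_lt_const hε] with n hn hn2
        obtain ⟨h1, h2⟩ := hw n hn
        have h3 := rhoF_mem huv (n : ℝ)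
        rw [abs_le] at h2
        rw [h1, Set.mem_Icc, EReal.coe_le_coe_iff, EReal.coe_le_coe_iff]
        constructor <;> linarith
      by_contra hc
      have hopen : (Set.Icc ((u - ε : ℝ) : EReal) ((v + ε : ℝ) : EReal))ᶜ ∈ nhds t :=
        isClosed_Icc.isOpen_compl.mem_nhds hc
      have hf := (mapClusterPt_iff_frequently.1 ht) _ hopen
      obtain ⟨n, h1, h2⟩ := (hf.and_eventually hev).exists
      exact h1 h2
    have h1 := hbd 1 one_pos
    induction t with
    | bot => exact absurd (le_bot_iff.1 h1.1) (EReal.coe_ne_bot _)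
    | top => exact absurd (top_le_iff.1 h1.2) (EReal.coe_ne_top _)
    | coe t =>
      refine ⟨t, ⟨?_, ?_⟩, rfl⟩
      · refine le_of_forall_pos_le_add fun ε hε => ?_
        have := EReal.coe_le_coe_iff.1 (hbd ε hε).1
        linarith
      · refine le_of_forall_pos_le_add fun ε hε => ?_
        exact EReal.coe_le_coe_iff.1 (hbd ε hε).2
  · rintro ⟨s, hs, rfl⟩
    obtain ⟨φ, hφ, hφs⟩ := rho_subseq hu huv hs
    have hd : Tendsto (fun k => w (φ k) - rhoF u v (φ k)) atTop (nhds 0) := by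
      refine squeeze_zero_norm' ?_ (hK.comp hφ)
      filter_upwards [hφ.eventually_gt_atTop n0] with k hk
      exact (hw _ hk).2
    have hws : Tendsto (fun k => w (φ k)) atTop (nhds s) := by
      have := hd.add hφs
      simpa using this
    have has : Tendsto (a ∘ φ) atTop (nhds (s : EReal)) := by
      refine ((continuous_coe_real_ereal.tendsto s).comp hws).congr' ?_
      filter_upwards [hφ.eventually_gt_atTop n0] with k hk
      exact (hw _ hk).1.symm
    exact MapClusterPt.of_comp hφ has.mapClusterPt
end

lemma dimH_le_of_inv_holder {s : Set (ℝ × ℝ)} {g : ℝ × ℝ → ℝ × ℝ} {C r : NNReal} (hr : 0 < r)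
    (h : ∀ a ∈ s, ∀ b ∈ s, dist a b ≤ C * dist (g a) (g b) ^ (r : ℝ)) :
    dimH s ≤ dimH (g '' s) / r := by
  classical
  have hr' : (r : ℝ) ≠ 0 := by exact_mod_cast hr.ne'
  have hinj : Set.InjOn g s := by
    intro a ha b hb hab
    have := h a ha b hb
    rw [hab, dist_self, Real.zero_rpow hr', mul_zero] at this
    exact dist_le_zero.1 this
  have hF : HolderOnWith C r (Function.invFunOn g s) (g '' s) := by
    rintro _ ⟨a, ha, rfl⟩ _ ⟨b, hb, rfl⟩
    rw [hinj.leftInvOn_invFunOn ha, hinj.leftInvOn_invFunOn hb, edist_dist, edist_dist,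
      ENNReal.ofReal_rpow_of_nonneg dist_nonneg r.coe_nonneg, ← ENNReal.ofReal_coe_nnreal,
      ← ENNReal.ofReal_mul C.coe_nonneg]
    exact ENNReal.ofReal_le_ofReal (h a ha b hb)
  have := hF.dimH_image_le hr
  rwa [hinj.invFunOn_image subset_rfl] at this

lemma exists_N {β θ : ℝ} (hβ : 1 < β) (hθ1 : θ < 1) :
    ∃ N : ℕ, β ^ (((N : ℝ) + 1) * θ) ≤ ((fullF β N).card : ℝ) - 1 ∧ 
      1 ≤ β ^ (((N : ℝ) + 1) * θ) ∨ θ ≤ 0 := by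
  by_cases hθ : θ ≤ 0
  · exact ⟨0, Or.inr hθ⟩
  push Not at hθ
  have hβ0 : 0 < β := by linarith
  have hlog := Real.log_pos hβ
  obtain ⟨N, hN⟩ := (sq_small (u := (1 - θ) * Real.log β) (by nlinarith)
    (ε := (2 * β ^ θ)⁻¹) (by positivity)).exists
  have hone : 1 ≤ β ^ (((N : ℝ) + 1) * θ) := Real.one_le_rpow hβ.le (by positivity)
  refine ⟨N, Or.inl ⟨?_, hone⟩⟩
  have hc := fullF_card hβ N
  have hN0 : (0:ℝ) ≤ N := by positivity
  have e1 : β ^ (((N : ℝ) + 1) * θ) * Real.exp ((1 - θ) * Real.log β * N) = β ^ N * β ^ θ := by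
    rw [← Real.rpow_natCast, Real.rpow_def_of_pos hβ0, Real.rpow_def_of_pos hβ0,
      Real.rpow_def_of_pos hβ0, ← Real.exp_add, ← Real.exp_add]
    congr 1; ring
  have h1 : 2 * β ^ θ * ((N:ℝ) + 1) ≤ Real.exp ((1 - θ) * Real.log β * N) := by
    have : ((N:ℝ) + 1) ≤ (2 * β ^ θ)⁻¹ * Real.exp ((1 - θ) * Real.log β * N) := by nlinarith
    rwa [inv_mul_eq_div, le_div_iff₀ (by positivity), mul_comm] at this
  have hθp : 0 < β ^ θ := by positivity
  have h2 : β ^ (((N : ℝ) + 1) * θ) * (2 * ((N:ℝ) + 1)) ≤ β ^ N := by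
    refine le_of_mul_le_mul_right ?_ hθp
    rw [← e1]
    calc _ = β ^ (((N : ℝ) + 1) * θ) * (2 * β ^ θ * ((N:ℝ) + 1)) := by ring
      _ ≤ _ := mul_le_mul_of_nonneg_left h1 (by positivity)
  have h3 : ((N:ℝ) + 1) * (2 * β ^ (((N : ℝ) + 1) * θ)) ≤ (N + 1) * ((fullF β N).card : ℝ) := by
    linarith
  have h4 := le_of_mul_le_mul_left h3 (by positivity)
  linarith

lemma holder_const {β θ : ℝ} (hβ : 1 < β) (hθ : 0 < θ) {N M : ℕ}
    (hM : β ^ (((N : ℝ) + 1) * θ) ≤ M) (hM1 : 1 < M) {φ : ℕ → ℕ} {C0 : ℝ}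
    (hφ : ∀ q : ℕ, θ * q - C0 ≤ φ q) :
    ∃ C : ℝ, 0 ≤ C ∧ ∀ q, ((M : ℝ) ^ φ q)⁻¹ ≤ C * (((β ^ (N + 1)) ^ q)⁻¹) ^ (θ * θ) := by
  have hβ0 : 0 < β := by linarith
  have hMp : (0:ℝ) < M := by positivity
  have hM1' : (1:ℝ) ≤ M := by exact_mod_cast hM1.le
  refine ⟨(M:ℝ) ^ C0, by positivity, fun q => ?_⟩
  rw [Real.inv_rpow (by positivity), ← div_eq_mul_inv, le_div_iff₀ (by positivity),
    inv_mul_le_iff₀ (by positivity)]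
  have e : ((β ^ (N + 1)) ^ q) ^ (θ * θ) = (β ^ (((N : ℝ) + 1) * θ)) ^ (θ * q) := by
    rw [← pow_mul, ← Real.rpow_natCast, ← Real.rpow_mul hβ0.le, ← Real.rpow_mul hβ0.le]
    congr 1; push_cast; ring
  rw [e]
  calc _ ≤ (M:ℝ) ^ (θ * q) := Real.rpow_le_rpow (by positivity) hM (by positivity)
    _ ≤ (M:ℝ) ^ ((φ q : ℝ) + C0) := Real.rpow_le_rpow_of_exponent_le hM1' (by linarith [hφ q])
    _ = _ := by rw [Real.rpow_add hMp, Real.rpow_natCast]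

def accSet (β u v : ℝ) : Set (ℝ × ℝ) := {p : ℝ × ℝ | p.1 ∈ Set.Ico (0:ℝ) 1 ∧ p.2 ∈ Set.Ico (0:ℝ) 1 ∧
      {t : EReal | MapClusterPt t Filter.atTop (fun n => waitingRatio β p.1 p.2 n)} =
        Real.toEReal '' Set.Icc u v}

lemma dim_square : dimH (Set.Ico (0:ℝ) 1 ×ˢ Set.Ico (0:ℝ) 1) = 2 := by
  rw [Real.dimH_of_nonempty_interior]
  · simp
  · rw [interior_prod_eq, interior_Ico]
    exact ⟨(1/2, 1/2), by constructor <;> constructor <;> norm_num⟩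

lemma dim_lower {β : ℝ} (hβ : 1 < β) {u v : ℝ} (hu : 0 < u) (huv : u ≤ v) {θ : NNReal}
    (hθ : 0 < θ) (hθ1 : θ < 1) :
    (2 : ENNReal) ≤ dimH (accSet β u v) / ((θ * θ : NNReal) : ENNReal) := by
  classical
  have hθ' : (0:ℝ) < θ := by exact_mod_cast hθ
  have hθ1' : (θ:ℝ) < 1 := by exact_mod_cast hθ1
  obtain ⟨N, ⟨hN, hN1⟩ | hcon⟩ := exists_N (θ := (θ:ℝ)) hβ hθ1'
  swap
  · linarith
  set S : Finset ℝ := (fullF β N).erase 0 with hS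
  set M := S.card with hMdef
  have hMc : (M : ℝ) = (fullF β N).card - 1 := by
    rw [hMdef, hS, Finset.card_erase_of_mem (zero_mem_fullF hβ N), Nat.cast_sub]
    · simp
    · exact Finset.card_pos.2 ⟨0, zero_mem_fullF hβ N⟩
  rw [← hMc] at hN
  have hM1 : 1 < M := by
    have : (1:ℝ) < β ^ (((N : ℝ) + 1) * θ) := Real.one_lt_rpow hβ (by positivity)
    have : (1:ℝ) < M := by linarith
    exact_mod_cast this
  have : NeZero M := ⟨by omega⟩
  let e : Fin M ≃ S := (Finset.equivFin S).symm
  have he : ∀ i, ((e i : S) : ℝ) ∈ fullF β N ∧ ((e i : S) : ℝ) ≠ 0 := fun i => by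
    have h := Finset.mem_erase.1 (e i).2
    exact ⟨h.2, h.1⟩
  have einj : ∀ i j, ((e i : S) : ℝ) = e j → i = j := fun i j h => e.injective (Subtype.ext h)
  obtain ⟨p, J0, hJ, hp, hdens, K, hK⟩ := exists_p hu huv (N + 1) (by omega)
  obtain ⟨C1, hC1, hdens⟩ := hdens (1 - θ) (by linarith)
  let cd : ℝ → ℕ → ℝ := fun s i => ((e (Real.digits s M i) : S) : ℝ)
  have cdm : ∀ s i, cd s i ∈ fullF β N := fun s i => (he _).1
  have cd0 : ∀ s i, cd s i ≠ 0 := fun s i => (he _).2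
  let g : ℝ × ℝ → ℝ × ℝ := fun a =>
    (bval β N (insX p J0 (cd a.1) (cd a.2)), bval β N (insY (cd a.2)))
  set Q : Set (ℝ × ℝ) := Set.Ico (0:ℝ) 1 ×ˢ Set.Ico (0:ℝ) 1 with hQ
  -- image lies in the set
  have himg : g '' Q ⊆ accSet β u v := by
    rintro _ ⟨a, ha, rfl⟩
    refine ⟨bval_mem hβ (insX_mem hβ (cdm _) (cdm _)), bval_mem hβ (insY_mem hβ (cdm _)), ?_⟩
    refine cluster_set (K := K) (n0 := J0 * (N + 1)) hu huv fun n hn => ?_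
    have hn' : J0 * (N + 1) < n := hn
    have hd : J0 ≤ (n - 1) / (N + 1) := by
      rw [Nat.le_div_iff_mul_le (by omega)]; omega
    obtain ⟨j, hj⟩ := Nat.exists_eq_add_of_le hd
    have b1 := Nat.div_add_mod' (n - 1) (N + 1)
    have b2 := Nat.mod_lt (n - 1) (show 0 < N + 1 by omega)
    rw [hj] at b1
    have hn1 : (j + J0) * (N + 1) < n := by rw [add_comm j]; omega
    have hn2 : n ≤ (j + 1 + J0) * (N + 1) := by
      have : (j + 1 + J0) * (N + 1) = (J0 + j) * (N + 1) + (N + 1) := by ring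
      omega
    obtain ⟨w, hw1, hw2, hw⟩ := waiting_bounds hβ hJ hp (cdm a.1) (cdm a.2) (cd0 a.1) (cd0 a.2) j n hn1 hn2
    refine ⟨_, hw, ?_⟩
    have hnpos : (0:ℝ) < n := by
      have : 0 < n := by omega
      exact_mod_cast this
    have := hK j n w hn1 hn2 hw1 hw2
    have e3 : Real.log w / n - rhoF u v n = (Real.log w - n * rhoF u v n) / n := by
      field_simp
    rw [e3, abs_div, abs_of_pos hnpos]
    exact div_le_div_of_nonneg_right this hnpos.le
  -- Hölder
  have hcount : ∀ q : ℕ, (θ:ℝ) * q - (C1 + (J0 + 1)) ≤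
      (Nat.count (fun q => ¬ isSpec p J0 q) q : ℝ) := fun q => by
    have := count_free_ge hp (by linarith) hC1 hdens q
    linarith
  obtain ⟨Cx, hCx, hx⟩ := holder_const hβ hθ' hN hM1
    (φ := fun q => Nat.count (fun q => ¬ isSpec p J0 q) q) (C0 := C1 + (J0 + 1)) hcount
  obtain ⟨Cy, hCy, hy⟩ := holder_const hβ hθ' hN hM1 (φ := fun q => q - 3) (C0 := 3) (fun q => by
      have h1 : (q:ℝ) ≤ ((q - 3 : ℕ) : ℝ) + 3 := by
        have : q ≤ q - 3 + 3 := by omega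
        exact_mod_cast this
      have : (θ:ℝ) * q ≤ q := mul_le_of_le_one_left (by positivity) hθ1'.le
      linarith)
  set κ := ((β ^ N)⁻¹ - (β ^ (N+1))⁻¹) ^ ((θ:ℝ) * θ) with hκ
  have hκ0 : 0 ≤ κ := by
    apply Real.rpow_nonneg
    rw [sub_nonneg]
    exact inv_anti₀ (by positivity) (pow_le_pow_right₀ hβ.le (by omega))
  have hhold : ∀ a ∈ Q, ∀ b ∈ Q, dist a b ≤
      ((max (Cx / κ) (Cy / κ)).toNNReal : ℝ) * dist (g a) (g b) ^ (((θ * θ : NNReal)) : ℝ) := by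
    intro a ha b hb
    have hcoe : (((θ * θ : NNReal)) : ℝ) = (θ:ℝ) * θ := by push_cast; rfl
    have hmax : 0 ≤ max (Cx / κ) (Cy / κ) := le_max_of_le_left (by positivity)
    rw [hcoe, Real.coe_toNNReal _ hmax]
    have hX := bval_holder (r := (θ:ℝ) * θ) hβ (by positivity) hCx hx
      (insX_mem (p := p) (J0 := J0) hβ (cdm a.1) (cdm a.2)) (insX_mem (p := p) (J0 := J0) hβ (cdm b.1) (cdm b.2))
      (δ := Real.digits a.1 M) (δ' := Real.digits b.1 M)
      (fun q hq i hi => einj _ _ (insX_agree hq i hi)) ?_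
    swap
    · intro hEq
      funext i
      obtain ⟨q, hq⟩ := exists_nat_gt (((i:ℝ) + (C1 + (J0 + 1))) / θ)
      rw [div_lt_iff₀ hθ'] at hq
      have hi : i < Nat.count (fun q => ¬ isSpec p J0 q) q := by
        have h1 := hcount q
        have h2 : (i:ℝ) < Nat.count (fun q => ¬ isSpec p J0 q) q := by linarith
        exact_mod_cast h2
      exact einj _ _ (insX_agree (q := q) (fun k _ => congrFun hEq k) i hi)
    have hY := bval_holder (r := (θ:ℝ) * θ) hβ (by positivity) hCy hy
      (insY_mem hβ (cdm a.2)) (insY_mem hβ (cdm b.2))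
      (δ := Real.digits a.2 M) (δ' := Real.digits b.2 M)
      (fun q hq i hi => einj _ _ (insY_agree hq i hi)) (fun h => by
        funext i
        exact einj _ _ (insY_agree (q := i + 4) (fun k _ => congrFun h k) i (by omega)))
    rw [Real.ofDigits_digits hM1 ha.1, Real.ofDigits_digits hM1 hb.1] at hX
    rw [Real.ofDigits_digits hM1 ha.2, Real.ofDigits_digits hM1 hb.2] at hY
    have d1 : |bval β N (insX p J0 (cd a.1) (cd a.2)) - bval β N (insX p J0 (cd b.1) (cd b.2))| ≤
      dist (g a) (g b) := by
      rw [Prod.dist_eq]; exact le_max_left _ _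
    have d2 : |bval β N (insY (cd a.2)) - bval β N (insY (cd b.2))| ≤ dist (g a) (g b) := by
      rw [Prod.dist_eq]; exact le_max_right _ _
    rw [Prod.dist_eq]
    refine max_le ?_ ?_
    · refine hX.trans ?_
      exact mul_le_mul (le_max_left _ _) (Real.rpow_le_rpow (abs_nonneg _) d1 (by positivity))
        (by positivity) hmax
    · refine hY.trans ?_
      exact mul_le_mul (le_max_right _ _) (Real.rpow_le_rpow (abs_nonneg _) d2 (by positivity))
        (by positivity) hmax
  have hfin := dimH_le_of_inv_holder (r := θ * θ) (by positivity) hhold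
  rw [hQ, dim_square] at hfin
  exact hfin.trans (ENNReal.div_le_div_right (dimH_mono himg) _)

lemma dim_lower' {β : ℝ} (hβ : 1 < β) {u v : ℝ} (hu : 0 < u) (huv : u ≤ v) :
    (2 : ENNReal) ≤ dimH (accSet β u v) := by
  have h : ∀ θ : NNReal, 0 < θ → θ < 1 → ((2 * (θ * θ) : NNReal) : ENNReal) ≤ dimH (accSet β u v) := by
    intro θ h0 h1
    have := dim_lower hβ hu huv h0 h1
    rw [ENNReal.le_div_iff_mul_le (Or.inl (by positivity)) (Or.inl ENNReal.coe_ne_top)] at this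
    push_cast at this ⊢
    exact this
  have hc : Tendsto (fun θ : NNReal => ((2 * (θ * θ) : NNReal) : ENNReal)) (nhdsWithin 1 (Set.Iio 1))
      (nhds ((2 * (1 * 1) : NNReal) : ENNReal)) := by
    refine Tendsto.mono_left ?_ nhdsWithin_le_nhds
    refine (ENNReal.continuous_coe.tendsto _).comp ?_
    exact (by fun_prop : Continuous (fun θ : NNReal => 2 * (θ * θ))).tendsto 1
  have : ((2 * (1 * 1) : NNReal) : ENNReal) ≤ dimH (accSet β u v) := by
    have : (nhdsWithin (1:NNReal) (Set.Iio 1)).NeBot := nhdsLT_neBot_of_exists_lt ⟨0, one_pos⟩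
    refine le_of_tendsto hc ?_
    filter_upwards [Ioo_mem_nhdsLT (show (0:NNReal) < 1 from one_pos)] with θ hθ
    exact h θ hθ.1 hθ.2
  simpa using this

theorem dimH_accumulation_set (β : ℝ) (hβ : 1 < β) (u v : ℝ) (hu : 0 < u) (huv : u ≤ v) :
    dimH {p : ℝ × ℝ | p.1 ∈ Set.Ico (0:ℝ) 1 ∧ p.2 ∈ Set.Ico (0:ℝ) 1 ∧
      {t : EReal | MapClusterPt t Filter.atTop (fun n => waitingRatio β p.1 p.2 n)} =
        Real.toEReal '' Set.Icc u v} = 2 := by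
  refine le_antisymm ?_ (dim_lower' hβ hu huv)
  refine (dimH_mono (Set.subset_univ _)).trans ?_
  rw [Real.dimH_univ_eq_finrank]
  simp
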